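/- arXiv:2411.13166 — 6 statements merged into one kernel-verified Lean document; each statement's English description precedes it below -/
import Mathlib

section
/- For all natural numbers n and m, the shifted Legendre polynomials satisfy the orthogonality relation ∫₀¹ P_n(2x−1) P_m(2x−1) dx = δ_{n,m}/(2n+1), where δ_{n,m} is the Kronecker delta. -/
open MeasureTheory

/-- The Legendre polynomial `P n`, defined by Rodrigues' formula
`P_n(x) = (1/(2^n n!)) (d/dx)^n ((x² − 1)^n)`. -/
noncomputable def legendre (n : ℕ) (x : ℝ) : ℝ :=
  (1 / ((2 : ℝ) ^ n * n.factorial)) * iteratedDeriv n (fun y : ℝ => (y ^ 2 - 1) ^ n) x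

open Polynomial in
theorem Polynomial.iteratedDeriv_eval (p : ℝ[X]) (n : ℕ) :
    iteratedDeriv n (fun x => p.eval x) = fun x => (derivative^[n] p).eval x := by
  induction n with
  | zero => simp
  | succ n ih =>
    ext x
    rw [iteratedDeriv_succ, ih, Function.iterate_succ_apply']
    exact Polynomial.deriv _

open Polynomial in
/-- Repeated integration by parts, when the boundary terms vanish. -/
theorem Polynomial.integral_iterate_derivative_mul {a b : ℝ} (p : ℝ[X]) (n : ℕ)
    (ha : ∀ k < n, (derivative^[k] p).eval a = 0) (hb : ∀ k < n, (derivative^[k] p).eval b = 0)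
    (q : ℝ[X]) :
    ∫ x in a..b, (derivative^[n] p).eval x * q.eval x =
      (-1) ^ n * ∫ x in a..b, p.eval x * (derivative^[n] q).eval x := by
  induction n generalizing q with
  | zero => simp
  | succ n ih =>
    have parts := intervalIntegral.integral_deriv_mul_eq_sub (a := a) (b := b)
      (fun x _ => (derivative^[n] p).hasDerivAt x) (fun x _ => q.hasDerivAt x)
      ((derivative (derivative^[n] p)).continuous.intervalIntegrable _ _)
      ((derivative q).continuous.intervalIntegrable _ _)
    rw [ha n n.lt_succ_self, hb n n.lt_succ_self, intervalIntegral.integral_add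
      (Continuous.intervalIntegrable (by fun_prop) _ _)
      (Continuous.intervalIntegrable (by fun_prop) _ _),
      ih (fun k hk => ha k (by omega)) (fun k hk => hb k (by omega))] at parts
    rw [Function.iterate_succ_apply', Function.iterate_succ_apply, pow_succ]
    linarith

open Polynomial in
theorem Polynomial.eval_iterate_derivative_pow_eq_zero {R : Type*} [CommRing R] {p : R[X]} {a : R}
    (h : p.eval a = 0) {k n : ℕ} (hk : k < n) : (derivative^[k] (p ^ n)).eval a = 0 := by
  have hdvd : p ∣ derivative^[k] (p ^ n) :=
    (dvd_pow_self p (by omega)).trans (pow_sub_dvd_iterate_derivative_pow p n k)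
  exact eval_eq_zero_of_dvd_of_eval_eq_zero hdvd h

theorem integral_sq_sub_one_pow_succ (n : ℕ) :
    (2 * n + 3 : ℝ) * ∫ x in (-1 : ℝ)..1, (x ^ 2 - 1) ^ (n + 1) =
      -(2 * (n + 1) : ℝ) * ∫ x in (-1 : ℝ)..1, (x ^ 2 - 1) ^ n := by
  have hderiv (x : ℝ) : HasDerivAt (fun x : ℝ => x * (x ^ 2 - 1) ^ (n + 1))
      ((2 * n + 3) * (x ^ 2 - 1) ^ (n + 1) + 2 * (n + 1) * (x ^ 2 - 1) ^ n) x := by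
    refine ((hasDerivAt_id' x).fun_mul
      ((((hasDerivAt_id' x).fun_pow 2).sub_const 1).fun_pow (n + 1))).congr_deriv ?_
    simp
    ring
  have ftc := intervalIntegral.integral_eq_sub_of_hasDerivAt (a := -1) (b := 1)
    (fun x _ => hderiv x) (Continuous.intervalIntegrable (by fun_prop) _ _)
  rw [intervalIntegral.integral_add (Continuous.intervalIntegrable (by fun_prop) _ _)
    (Continuous.intervalIntegrable (by fun_prop) _ _), intervalIntegral.integral_const_mul,
    intervalIntegral.integral_const_mul] at ftc
  norm_num at ftc
  linarith

theorem factorial_mul_integral_sq_sub_one_pow (n : ℕ) :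
    ((2 * n + 1).factorial : ℝ) * ((-1) ^ n * ∫ x in (-1 : ℝ)..1, (x ^ 2 - 1) ^ n) =
      2 * (2 ^ n * n.factorial) ^ 2 := by
  induction n with
  | zero => norm_num
  | succ n ih =>
    have hfac : ((2 * (n + 1) + 1).factorial : ℝ) =
        (2 * n + 3) * ((2 * n + 2) * (2 * n + 1).factorial) := by
      rw [show 2 * (n + 1) + 1 = 2 * n + 1 + 1 + 1 by ring, Nat.factorial_succ, Nat.factorial_succ]
      push_cast
      ring
    rw [hfac, Nat.factorial_succ n]
    push_cast
    linear_combination (2 * (n : ℝ) + 2) ^ 2 * ih - (2 * (n : ℝ) + 2) *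
      (2 * n + 1).factorial * (-1) ^ n * integral_sq_sub_one_pow_succ n

open Polynomial in
theorem legendre_eq_eval (n : ℕ) (x : ℝ) :
    legendre n x = 1 / (2 ^ n * n.factorial) *
      (derivative^[n] ((X ^ 2 - 1 : ℝ[X]) ^ n)).eval x := by
  rw [← congrFun (Polynomial.iteratedDeriv_eval _ n) x]
  simp [legendre]

open Polynomial in
theorem integral_legendre_mul (n m : ℕ) :
    ∫ x in (-1 : ℝ)..1, legendre n x * legendre m x =
      1 / (2 ^ n * n.factorial) * (1 / (2 ^ m * m.factorial)) * ((-1) ^ n *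
        ∫ x in (-1 : ℝ)..1, (x ^ 2 - 1) ^ n *
          (derivative^[n + m] ((X ^ 2 - 1 : ℝ[X]) ^ m)).eval x) := by
  have parts := Polynomial.integral_iterate_derivative_mul (a := -1) (b := 1)
    ((X ^ 2 - 1 : ℝ[X]) ^ n) n
    (fun k hk => eval_iterate_derivative_pow_eq_zero (by simp) hk)
    (fun k hk => eval_iterate_derivative_pow_eq_zero (by simp) hk)
    (derivative^[m] ((X ^ 2 - 1 : ℝ[X]) ^ m))
  simp only [← Function.iterate_add_apply, eval_pow, eval_sub, eval_X, eval_one] at parts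
  rw [← parts, ← intervalIntegral.integral_const_mul]
  simp only [legendre_eq_eval]
  congr 1 with x
  ring

open Polynomial in
theorem integral_legendre_mul_of_lt {n m : ℕ} (h : m < n) :
    ∫ x in (-1 : ℝ)..1, legendre n x * legendre m x = 0 := by
  have hdeg : ((X ^ 2 - 1 : ℝ[X]) ^ m).natDegree < n + m := by
    have : ((X ^ 2 - 1 : ℝ[X]) ^ m).natDegree ≤ m * 2 := by compute_degree
    omega
  rw [integral_legendre_mul, iterate_derivative_eq_zero hdeg]
  simp

open Polynomial in
theorem integral_legendre_sq (n : ℕ) :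
    ∫ x in (-1 : ℝ)..1, legendre n x * legendre n x = 2 / (2 * n + 1) := by
  have hmonic : (X ^ 2 - 1 : ℝ[X]).Monic := by monicity!
  have hdeg : ((X ^ 2 - 1 : ℝ[X]) ^ n).natDegree = n + n := by
    rw [hmonic.natDegree_pow, show (X ^ 2 - 1 : ℝ[X]).natDegree = 2 by compute_degree!]
    ring
  have htop : derivative^[n + n] ((X ^ 2 - 1 : ℝ[X]) ^ n) = C ((2 * n).factorial : ℝ) := by
    have hconst := natDegree_iterate_derivative ((X ^ 2 - 1 : ℝ[X]) ^ n) (n + n)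
    rw [hdeg, Nat.sub_self, Nat.le_zero] at hconst
    rw [eq_C_of_natDegree_eq_zero hconst, coeff_iterate_derivative, zero_add, ← hdeg,
      coeff_natDegree, hmonic.pow n, hdeg, Nat.descFactorial_self, ← two_mul, nsmul_one]
  have hint := factorial_mul_integral_sq_sub_one_pow n
  rw [Nat.factorial_succ (2 * n)] at hint
  push_cast at hint
  rw [integral_legendre_mul, htop]
  simp only [eval_C, intervalIntegral.integral_mul_const]
  have : (2 : ℝ) ^ n * n.factorial ≠ 0 := by positivity
  field_simp
  linear_combination hint

/-- Orthogonality of the shifted Legendre polynomials on `[0,1]`: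
`∫₀¹ P_n(2x−1) P_m(2x−1) dx = δ_{n,m} / (2n+1)`. -/
theorem shifted_legendre_orthogonality (n m : ℕ) :
    (∫ x in (0 : ℝ)..1, legendre n (2 * x - 1) * legendre m (2 * x - 1))
      = if n = m then 1 / (2 * (n : ℝ) + 1) else 0 := by
  have hsub := intervalIntegral.integral_comp_mul_sub (a := 0) (b := 1)
    (fun x => legendre n x * legendre m x) (two_ne_zero' ℝ) 1
  norm_num at hsub
  rw [hsub]
  split_ifs with h
  · subst h
    rw [integral_legendre_sq]
    ring
  · rcases lt_or_gt_of_ne h with h | h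
    · simp only [mul_comm (legendre n _), integral_legendre_mul_of_lt h, mul_zero]
    · rw [integral_legendre_mul_of_lt h, mul_zero]
end

section
/- For every natural number n and every x ∈ ℝ, (1/n!) (d/dx)^n ((x²−x)^n) = P_n(2x−1); that is, the Rodrigues-type formula (1/n!)(d/dx)^n (x²−x)^n produces exactly the shifted Legendre polynomial. -/
/-- The Rodrigues-type formula `(1/n!) (d/dx)^n ((x² − x)^n)` produces exactly the
shifted Legendre polynomial `P_n(2x − 1)`. -/
theorem shifted_legendre_rodrigues (n : ℕ) (x : ℝ) :
    (1 / (n.factorial : ℝ)) * iteratedDeriv n (fun y : ℝ => (y ^ 2 - y) ^ n) x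
      = legendre n (2 * x - 1) := by
  have key : (fun y : ℝ => ((2 * y - 1) ^ 2 - 1) ^ n) = fun y => (4 : ℝ) ^ n * (y ^ 2 - y) ^ n := by
    funext y
    rw [← mul_pow]
    ring
  have hshift : iteratedDeriv n (fun y : ℝ => ((2 * y - 1) ^ 2 - 1) ^ n) x
      = 2 ^ n * iteratedDeriv n (fun y : ℝ => (y ^ 2 - 1) ^ n) (2 * x - 1) := by
    have hscale := congrFun (iteratedDeriv_comp_const_mul (n := n)
      (f := fun y : ℝ => ((y - 1) ^ 2 - 1) ^ n) (by fun_prop) 2) x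
    have htrans := congrFun (iteratedDeriv_comp_sub_const n (fun y : ℝ => (y ^ 2 - 1) ^ n) 1) (2 * x)
    simpa only [htrans] using hscale
  rw [key, iteratedDeriv_const_mul_field, show (4 : ℝ) = 2 * 2 by norm_num, mul_pow, mul_assoc] at hshift
  have hcancel := mul_left_cancel₀ (pow_ne_zero n (two_ne_zero (α := ℝ))) hshift
  rw [legendre, ← hcancel]
  field_simp
end

section
/- For every fixed natural number n, the spherical Bessel function of the first kind satisfies j_n(θ) − sin(θ − nπ/2)/θ − (n(n+1)/(2θ²)) cos(θ − nπ/2) = O(θ^{−3}) as θ → ∞. -/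
open Asymptotics Filter

/-- The spherical Bessel function of the first kind, defined by Rayleigh's formula
`j_n(θ) = (−θ)^n ((1/θ) d/dθ)^n (sin θ / θ)`. -/
noncomputable def sphericalBessel (n : ℕ) (θ : ℝ) : ℝ :=
  (-θ) ^ n * ((fun f : ℝ → ℝ => fun t : ℝ => deriv f t / t)^[n]
    (fun t : ℝ => Real.sin t / t)) θ

/-- Every iterate in Rayleigh's formula is, on the positive half-line, a combination of a shifted
sine and cosine with coefficients polynomial in `t⁻¹`, whose leading terms are explicit. -/
theorem exists_polynomial_rayleigh_iterate (n : ℕ) :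
    ∃ P Q : Polynomial ℝ, ∀ t : ℝ, 0 < t →
      ((fun f : ℝ → ℝ => fun t : ℝ => deriv f t / t)^[n] (fun t : ℝ => Real.sin t / t)) t
        = (-1) ^ n * (t⁻¹) ^ n *
          ((t⁻¹ + t⁻¹ ^ 3 * P.eval t⁻¹) * Real.sin (t - n * Real.pi / 2)
            + ((n : ℝ) * (n + 1) / 2 * t⁻¹ ^ 2 + t⁻¹ ^ 3 * Q.eval t⁻¹)
              * Real.cos (t - n * Real.pi / 2)) := by
  induction n with
  | zero => exact ⟨0, 0, fun t _ => by simp [div_eq_inv_mul]⟩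
  | succ n ih =>
    obtain ⟨P, Q, h⟩ := ih
    open Polynomial in
    refine ⟨P - C ((n + 2) * (n * (n + 1) / 2) : ℝ) - C (n + 3 : ℝ) * X * Q
        - X ^ 2 * derivative Q, Q + C (n + 3 : ℝ) * X * P + X ^ 2 * derivative P,
      fun t ht => ?_⟩
    have ht0 : t ≠ 0 := ht.ne'
    have hinv : HasDerivAt (fun x : ℝ => x⁻¹) (-(t⁻¹ ^ 2)) t := by
      simpa [inv_pow] using hasDerivAt_inv ht0
    have hshift : HasDerivAt (fun x : ℝ => x - n * Real.pi / 2) 1 t :=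
      (hasDerivAt_id t).sub_const _
    have hP := (P.hasDerivAt t⁻¹).comp t hinv
    have hQ := (Q.hasDerivAt t⁻¹).comp t hinv
    have hderiv := ((hinv.pow n).const_mul ((-1 : ℝ) ^ n)).mul
      (((hinv.add ((hinv.pow 3).mul hP)).mul hshift.sin).add
        ((((hinv.pow 2).const_mul ((n : ℝ) * (n + 1) / 2)).add ((hinv.pow 3).mul hQ)).mul
          hshift.cos))
    have heq := hderiv.congr_of_eventuallyEq
      ((eventually_gt_nhds ht).mono fun x hx => h x hx)
    have hangle : t - ((n + 1 : ℕ) : ℝ) * Real.pi / 2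
        = t - n * Real.pi / 2 - Real.pi / 2 := by push_cast; ring
    have hpow : (n : ℝ) * t⁻¹ ^ (n - 1) * t⁻¹ = n * t⁻¹ ^ n := by
      cases n with
      | zero => simp
      | succ m => simp [pow_succ, mul_assoc]
    rw [Function.iterate_succ_apply', heq.deriv, hangle, Real.sin_sub_pi_div_two,
      Real.cos_sub_pi_div_two, div_eq_mul_inv]
    simp only [Polynomial.eval_sub, Polynomial.eval_add, Polynomial.eval_mul, Polynomial.eval_C,
      Polynomial.eval_X, Polynomial.eval_pow, Pi.add_apply, Pi.mul_apply, Pi.pow_apply,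
      Function.comp_apply]
    push_cast
    generalize t⁻¹ = u at *
    generalize Real.sin (t - n * Real.pi / 2) = S
    generalize Real.cos (t - n * Real.pi / 2) = K
    linear_combination (-(-1 : ℝ) ^ n * u ^ 2 * ((u + u ^ 3 * P.eval u) * S
      + ((n : ℝ) * (n + 1) / 2 * u ^ 2 + u ^ 3 * Q.eval u) * K)) * hpow

/-- As `θ → ∞`,
`j_n(θ) − sin(θ − nπ/2)/θ − (n(n+1)/(2θ²)) cos(θ − nπ/2) = O(θ^{−3})`. -/
theorem sphericalBessel_asymptotics (n : ℕ) :
    (fun θ : ℝ =>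
        sphericalBessel n θ - Real.sin (θ - n * Real.pi / 2) / θ
          - ((n : ℝ) * ((n : ℝ) + 1) / (2 * θ ^ 2)) * Real.cos (θ - n * Real.pi / 2))
      =O[atTop] fun θ : ℝ => 1 / θ ^ 3 := by
  obtain ⟨P, Q, h⟩ := exists_polynomial_rayleigh_iterate n
  have hpoly (R : Polynomial ℝ) : (fun θ : ℝ => R.eval θ⁻¹) =O[atTop] fun _ => (1 : ℝ) :=
    ((R.continuous.tendsto 0).comp tendsto_inv_atTop_zero).isBigO_one ℝ
  have hsin : (fun θ : ℝ => Real.sin (θ - n * Real.pi / 2)) =O[atTop] fun _ => (1 : ℝ) :=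
    .of_bound 1 (.of_forall fun θ => by simpa using Real.abs_sin_le_one _)
  have hcos : (fun θ : ℝ => Real.cos (θ - n * Real.pi / 2)) =O[atTop] fun _ => (1 : ℝ) :=
    .of_bound 1 (.of_forall fun θ => by simpa using Real.abs_cos_le_one _)
  have hrem := (isBigO_refl (fun θ : ℝ => 1 / θ ^ 3) atTop).mul
    (((hpoly P).mul hsin).add ((hpoly Q).mul hcos))
  refine hrem.congr' ?_ (.of_forall fun θ => by simp)
  filter_upwards [eventually_gt_atTop 0] with θ hθ
  have hcancel : (-θ) ^ n * ((-1) ^ n * θ⁻¹ ^ n) = 1 := by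
    rw [← mul_pow, ← mul_pow]
    simp [hθ.ne']
  rw [sphericalBessel, h θ hθ, ← mul_assoc, hcancel]
  field_simp
  ring
end

section
/- Let f : ℝ → ℂ be a Schwartz function and let f̂(ω) = ∫_ℝ f(t) e^{−iωt} dt denote its Fourier transform. Then for every fixed natural number n, lim_{ω_c → ∞} ∫_ℝ f(t) (∫₀^{ω_c} P_n(2ω/ω_c − 1) e^{−iωt} dω) dt = (−1)^n ∫₀^∞ f̂(ω) dω. In particular, the flat-spectral-density chain coupling γ_n^M, tested against f, concentrates in the large-cutoff limit at t = 0 (the limit of the interaction times t_n = nπ/ω_c). -/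
open MeasureTheory Filter

theorem continuous_legendre (n : ℕ) : Continuous (legendre n) := by
  have h : ContDiff ℝ n (fun y : ℝ => (y ^ 2 - 1) ^ n) := by fun_prop
  exact continuous_const.mul (h.continuous_iteratedDeriv n le_rfl)

theorem legendre_neg_one (n : ℕ) : legendre n (-1) = (-1) ^ n := by
  obtain ⟨R, -, hR⟩ := iteratedDeriv_mul_pow_sub_of_analytic (k := n) (t := 0) (z₀ := (-1 : ℝ))
    (R := fun y : ℝ => (y ^ 2 - 1) ^ n) (R₁ := fun y : ℝ => (y - 1) ^ n)
    (fun z => by fun_prop) (fun z => by rw [add_zero, ← mul_pow]; ring)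
  have hfac : (n.factorial : ℝ) ≠ 0 := by exact_mod_cast n.factorial_ne_zero
  have hpow : (-1 - 1 : ℝ) ^ n = (-1) ^ n * 2 ^ n := by rw [← mul_pow]; norm_num
  rw [legendre, hR, hpow]
  simp
  field_simp

/-- Legendre polynomials are bounded on `[-1, 1]`. -/
theorem exists_abs_legendre_le (n : ℕ) :
    ∃ C : ℝ, ∀ x ∈ Set.Icc (-1 : ℝ) 1, |legendre n x| ≤ C :=
  isCompact_Icc.exists_bound_of_continuousOn (continuous_legendre n).continuousOn

/-- The Fourier transform of a Schwartz function, with unnormalized angular frequency,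
is integrable. -/
theorem SchwartzMap.integrable_integral_mul_exp (f : SchwartzMap ℝ ℂ) :
    Integrable (fun ω : ℝ => ∫ t : ℝ, f t * Complex.exp (-Complex.I * ω * t)) := by
  have h := (FourierTransform.fourier f).integrable (μ := volume) |>.comp_div
    (R := 2 * Real.pi) (by positivity)
  refine h.congr (ae_of_all _ fun ω => ?_)
  beta_reduce
  rw [SchwartzMap.fourier_coe, Real.fourier_real_eq_integral_exp_smul]
  refine integral_congr_ae (ae_of_all _ fun t => ?_)
  have hpi : (Real.pi : ℂ) ≠ 0 := by exact_mod_cast Real.pi_ne_zero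
  simp only [smul_eq_mul, mul_comm (f t)]
  congr 2
  push_cast
  field_simp

/-- Integrating against a truncated Fourier integral moves the transform onto the other factor. -/
theorem integral_mul_intervalIntegral_exp {f g : ℝ → ℂ} {a b : ℝ} (hab : a ≤ b)
    (hf : Integrable f) (hg : IntegrableOn g (Set.Ioc a b)) :
    ∫ t : ℝ, f t * (∫ ω in a..b, g ω * Complex.exp (-Complex.I * ω * t)) =
      ∫ ω in Set.Ioc a b, g ω * ∫ t : ℝ, f t * Complex.exp (-Complex.I * ω * t) := by
  have hint : Integrable (Function.uncurry fun t ω : ℝ =>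
      f t * (g ω * Complex.exp (-Complex.I * ω * t)))
      (volume.prod (volume.restrict (Set.Ioc a b))) := by
    have h := (hf.mul_prod hg).mul_bdd (c := 1)
      (g := fun p : ℝ × ℝ => Complex.exp (-Complex.I * p.2 * p.1))
      (Continuous.aestronglyMeasurable (by fun_prop))
      (ae_of_all _ fun p => by simp [Complex.norm_exp])
    exact h.congr (ae_of_all _ fun p => mul_assoc _ _ _)
  simp_rw [intervalIntegral.integral_of_le hab, ← integral_const_mul]
  rw [integral_integral_swap hint]
  simp_rw [mul_left_comm]

/-- For a Schwartz function `f` with Fourier transform `f̂(ω) = ∫ f(t) e^{−iωt} dt`,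
the flat-spectral-density chain coupling tested against `f` satisfies
`lim_{ω_c → ∞} ∫ f(t) γ_n^M(t) dt = (−1)^n ∫₀^∞ f̂(ω) dω`. -/
theorem flat_coupling_large_cutoff_limit (n : ℕ) (f : SchwartzMap ℝ ℂ) :
    Tendsto
      (fun ωc : ℝ => ∫ t : ℝ, f t *
        (∫ ω in (0 : ℝ)..ωc, (legendre n (2 * ω / ωc - 1) : ℂ)
            * Complex.exp (-Complex.I * ω * t)))
      atTop
      (nhds ((-1 : ℂ) ^ n
        * ∫ ω in Set.Ioi (0 : ℝ), ∫ t : ℝ, f t * Complex.exp (-Complex.I * ω * t))) := by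
  set F : ℝ → ℂ := fun ω => ∫ t : ℝ, f t * Complex.exp (-Complex.I * ω * t)
  have hFint : Integrable F := f.integrable_integral_mul_exp
  obtain ⟨C, hC⟩ := exists_abs_legendre_le n
  have hcont (ωc : ℝ) : Continuous fun ω : ℝ => (legendre n (2 * ω / ωc - 1) : ℂ) :=
    Complex.continuous_ofReal.comp ((continuous_legendre n).comp (by fun_prop))
  have htendsto : Tendsto
      (fun ωc : ℝ => ∫ ω in Set.Ioi (0 : ℝ), (Set.Ioc 0 ωc).indicator
        (fun ω => (legendre n (2 * ω / ωc - 1) : ℂ) * F ω) ω) atTop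
      (nhds (∫ ω in Set.Ioi (0 : ℝ), (-1 : ℂ) ^ n * F ω)) := by
    refine tendsto_integral_filter_of_dominated_convergence (fun ω => |C| * ‖F ω‖) ?_ ?_
      (hFint.norm.const_mul _).integrableOn ?_
    · refine Eventually.of_forall fun ωc => ?_
      exact ((hcont ωc).aestronglyMeasurable.mul
        hFint.aestronglyMeasurable.restrict).indicator measurableSet_Ioc
    · refine Eventually.of_forall fun ωc => ae_of_all _ fun ω => ?_
      by_cases hω : ω ∈ Set.Ioc 0 ωc
      · have hωc : 0 < ωc := hω.1.trans_le hω.2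
        have h0 : 0 ≤ 2 * ω / ωc := by have := hω.1; positivity
        have h2 : 2 * ω / ωc ≤ 2 := by rw [div_le_iff₀ hωc]; linarith [hω.2]
        rw [Set.indicator_of_mem hω, norm_mul, Complex.norm_real, Real.norm_eq_abs]
        have hmem : 2 * ω / ωc - 1 ∈ Set.Icc (-1 : ℝ) 1 := ⟨by linarith, by linarith⟩
        exact mul_le_mul_of_nonneg_right ((hC _ hmem).trans (le_abs_self C)) (norm_nonneg _)
      · rw [Set.indicator_of_notMem hω, norm_zero]
        positivity
    · refine (ae_restrict_iff' measurableSet_Ioi).2 (ae_of_all _ fun ω hω => ?_)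
      have harg : Tendsto (fun ωc : ℝ => 2 * ω / ωc - 1) atTop (nhds (-1)) := by
        simpa using (tendsto_const_nhds.div_atTop tendsto_id).sub_const (1 : ℝ)
      have hlim := (Complex.continuous_ofReal.tendsto _).comp
        (((continuous_legendre n).tendsto (-1)).comp harg)
      rw [legendre_neg_one] at hlim
      push_cast at hlim
      refine (hlim.mul_const (F ω)).congr' ?_
      filter_upwards [eventually_ge_atTop ω] with ωc hωc
      rw [Set.indicator_of_mem (show ω ∈ Set.Ioc 0 ωc from ⟨hω, hωc⟩)]
      rfl
  rw [integral_const_mul] at htendsto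
  refine htendsto.congr' ?_
  filter_upwards [eventually_ge_atTop 0] with ωc hωc
  rw [integral_mul_intervalIntegral_exp hωc f.integrable (hcont ωc).integrableOn_Ioc,
    setIntegral_indicator measurableSet_Ioc, Set.inter_eq_right.2 Set.Ioc_subset_Ioi_self]
end

section
/- For every Schwartz function f : ℝ → ℂ, lim_{L → ∞} ∫_ℝ f(t) · sin(Lt)/(πt) dt = f(0); that is, the sinc kernel t ↦ sin(Lt)/(πt) is an approximate Dirac delta as L → ∞. -/
open MeasureTheory Filter

open scoped FourierTransform

/-- The Fourier transform of the indicator of `[-R, R]` is the sinc kernel. -/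
lemma intervalIntegral_cexp_eq_sinc {R t : ℝ} (ht : t ≠ 0) :
    ∫ w in (-R)..R, Complex.exp ((-2 * Real.pi * t * w : ℝ) * Complex.I)
      = ((Real.sin (2 * Real.pi * R * t) / (Real.pi * t) : ℝ) : ℂ) := by
  have hπ : (Real.pi : ℂ) ≠ 0 := by exact_mod_cast Real.pi_ne_zero
  have ht' : (t : ℂ) ≠ 0 := by exact_mod_cast ht
  have hc : (-2 * Real.pi * t * Complex.I : ℂ) ≠ 0 := by simp [hπ, ht']
  have h := integral_exp_mul_complex (a := -R) (b := R) hc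
  have hint : ∀ w : ℝ, ((-2 * Real.pi * t * w : ℝ) * Complex.I : ℂ)
      = (-2 * Real.pi * t * Complex.I : ℂ) * w := by
    intro w; push_cast; ring
  simp_rw [hint, h]
  push_cast
  rw [Complex.sin]
  have e1 : (-2 * Real.pi * t * Complex.I : ℂ) * R = -(2 * Real.pi * R * t) * Complex.I := by ring
  have e2 : (-2 * Real.pi * t * Complex.I : ℂ) * -R = (2 * Real.pi * R * t) * Complex.I := by ring
  rw [e1, e2]
  field_simp
  ring_nf
  simp only [Complex.I_sq]
  ring

/-- Truncating the inverse Fourier integral at the origin to `[-R, R]` amounts to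
integrating against the sinc kernel. -/
lemma intervalIntegral_fourier_eq_integral_sinc {f : ℝ → ℂ} (hf : Integrable f) (R : ℝ) :
    ∫ w in (-R)..R, 𝓕 f w
      = ∫ t, f t * ((Real.sin (2 * Real.pi * R * t) / (Real.pi * t) : ℝ) : ℂ) := by
  simp_rw [Real.fourier_real_eq_integral_exp_smul, smul_eq_mul]
  rw [intervalIntegral_integral_swap]
  · refine integral_congr_ae ?_
    filter_upwards [Measure.ae_ne volume (0 : ℝ)] with t ht
    rw [← intervalIntegral_cexp_eq_sinc ht, intervalIntegral.integral_mul_const, mul_comm]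
  · have : IsFiniteMeasure (volume.restrict (Set.uIoc (-R) R)) := by
      rw [Set.uIoc]; infer_instance
    refine (hf.comp_snd _).bdd_mul (c := 1) (Continuous.aestronglyMeasurable (by fun_prop)) ?_
    exact ae_of_all _ fun p => (Complex.norm_exp_ofReal_mul_I _).le

/-- The sinc kernel `t ↦ sin(Lt)/(πt)` is an approximate Dirac delta as `L → ∞`:
for every Schwartz function `f`, `lim_{L → ∞} ∫ f(t) sin(Lt)/(πt) dt = f(0)`. -/
theorem sinc_kernel_tendsto_delta (f : SchwartzMap ℝ ℂ) :
    Tendsto (fun L : ℝ => ∫ t : ℝ, f t * ((Real.sin (L * t) / (Real.pi * t) : ℝ) : ℂ))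
      atTop (nhds (f 0)) := by
  have hF : Integrable (𝓕 (f : ℝ → ℂ)) := by
    rw [← SchwartzMap.fourier_coe]
    exact (𝓕 f).integrable
  have h0 : ∫ w, 𝓕 (f : ℝ → ℂ) w = f 0 := by
    conv_rhs => rw [← f.continuous.fourierInv_fourier_eq f.integrable hF, Real.fourierInv_eq']
    simp
  have hR : Tendsto (fun L : ℝ => L / (2 * Real.pi)) atTop atTop :=
    tendsto_id.atTop_div_const Real.two_pi_pos
  have hlim := intervalIntegral_tendsto_integral hF (tendsto_neg_atTop_atBot.comp hR) hR
  rw [h0] at hlim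
  refine hlim.congr fun L => ?_
  have hL : 2 * Real.pi * (L / (2 * Real.pi)) = L := mul_div_cancel₀ _ Real.two_pi_pos.ne'
  simpa only [hL, Function.comp_apply] using
    intervalIntegral_fourier_eq_integral_sinc f.integrable (L / (2 * Real.pi))
end

section
/- Let α ≥ 0, ω_c > 0 and Δt ≥ π/ω_c, and define ΔC(τ) = ∫_{π/Δt}^{ω_c} 2αω e^{−iωτ} dω. Then 4 ∫₀^{Δt} ( ∫₀^{t'} |ΔC(t' − t'')| dt'' ) dt' ≤ 2π²α ( (ω_c Δt / π)² − 1 ). Consequently, the bath-correlation-function sampling error in a non-Markovian collision model with time step Δt > π/ω_c is of order O(Δt²). -/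
open MeasureTheory

/-- The norm of the Ohmic correlation function over the frequency band `[a, b]` is at most its
value at time zero. -/
lemma norm_ohmic_correlation_le {α a b : ℝ} (hα : 0 ≤ α) (ha : 0 ≤ a) (hab : a ≤ b) (t s : ℝ) :
    ‖∫ ω in a..b, (2 * (α : ℂ) * (ω : ℂ)) * Complex.exp (-Complex.I * ω * (t - s))‖
      ≤ α * (b ^ 2 - a ^ 2) := by
  have h := intervalIntegral.norm_integral_le_of_norm_le (μ := volume)
    (f := fun ω : ℝ => (2 * (α : ℂ) * (ω : ℂ)) * Complex.exp (-Complex.I * ω * (t - s)))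
    (g := fun ω : ℝ => 2 * α * ω) hab (Filter.Eventually.of_forall fun ω hω => ?_)
    (Continuous.intervalIntegrable (by fun_prop) _ _)
  · refine h.trans_eq ?_
    rw [intervalIntegral.integral_const_mul, integral_id]
    ring
  · have hω0 : 0 ≤ ω := ha.trans hω.1.le
    simp [Complex.norm_exp, abs_of_nonneg hα, abs_of_nonneg hω0]

/-- For the Spin Boson Model with Ohmic spectral density `J(ω) = 2αω` on `[0, ω_c]`,
the bath-correlation-function sampling error for a collision-model time step
`Δt ≥ π/ω_c` satisfies
`4 ∫₀^{Δt} ∫₀^{t'} |ΔC(t' − t'')| dt'' dt' ≤ 2π²α((ω_c Δt/π)² − 1)`,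
where `ΔC(τ) = ∫_{π/Δt}^{ω_c} 2αω e^{−iωτ} dω`; hence the sampling error is `O(Δt²)`. -/
theorem sampling_error_bound (α ωc Δt : ℝ) (hα : 0 ≤ α) (hωc : 0 < ωc)
    (hΔt : Real.pi / ωc ≤ Δt) :
    4 * (∫ t' in (0 : ℝ)..Δt, ∫ t'' in (0 : ℝ)..t',
          ‖∫ ω in (Real.pi / Δt : ℝ)..ωc,
              (2 * (α : ℂ) * (ω : ℂ)) * Complex.exp (-Complex.I * ω * (t' - t''))‖)
      ≤ 2 * Real.pi ^ 2 * α * ((ωc * Δt / Real.pi) ^ 2 - 1) := by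
  have hpi := Real.pi_pos
  have hΔ : 0 < Δt := (div_pos hpi hωc).trans_le hΔt
  have hband : Real.pi / Δt ≤ ωc := by
    rw [div_le_iff₀ hωc] at hΔt
    rw [div_le_iff₀ hΔ]
    linarith
  have h := intervalIntegral.norm_integral_le_of_norm_le (μ := volume)
    (f := fun t' : ℝ => ∫ t'' in (0 : ℝ)..t',
      ‖∫ ω in (Real.pi / Δt : ℝ)..ωc,
        (2 * (α : ℂ) * (ω : ℂ)) * Complex.exp (-Complex.I * ω * (t' - t''))‖)
    (g := fun t' : ℝ => α * (ωc ^ 2 - (Real.pi / Δt) ^ 2) * t') hΔ.le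
    (Filter.Eventually.of_forall fun t' ht' => ?_)
    (Continuous.intervalIntegrable (by fun_prop) _ _)
  · calc
      _ ≤ 4 * ∫ t' in (0 : ℝ)..Δt, α * (ωc ^ 2 - (Real.pi / Δt) ^ 2) * t' :=
        mul_le_mul_of_nonneg_left ((Real.le_norm_self _).trans h) (by norm_num)
      _ = _ := by
        rw [intervalIntegral.integral_const_mul, integral_id]
        field_simp
        ring
  · have hinner := intervalIntegral.norm_integral_le_of_norm_le_const (a := 0) (b := t')
      (f := fun t'' : ℝ => ‖∫ ω in (Real.pi / Δt : ℝ)..ωc,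
        (2 * (α : ℂ) * (ω : ℂ)) * Complex.exp (-Complex.I * ω * (t' - t''))‖)
      (C := α * (ωc ^ 2 - (Real.pi / Δt) ^ 2)) fun t'' _ => by
        rw [norm_norm]
        exact norm_ohmic_correlation_le hα (div_pos hpi hΔ).le hband t' t''
    rwa [sub_zero, abs_of_pos ht'.1] at hinner
end
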